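/- Every non-empty prefix of a complementary symmetric Rote sequence has exactly three distinct return words. -/

import Mathlib

/-- Words over the binary alphabet `{0,1}`, represented as `ZMod 2`. -/
abbrev Word := List (ZMod 2)

/-- The letter-exchange morphism `E`. -/
def Ex (v : Word) : Word := v.map (· + 1)

/-- `m` is an occurrence of the word `w` in the sequence `s`. -/
def OccAt (s : ℕ → ZMod 2) (w : Word) (m : ℕ) : Prop :=
  w = List.ofFn fun i : Fin w.length => s (m + i)

/-- `w` is a factor of the sequence `s`. -/
def IsFactor (s : ℕ → ZMod 2) (w : Word) : Prop := ∃ m, OccAt s w m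

/-- Factor complexity of a sequence. -/
noncomputable def Cplx (s : ℕ → ZMod 2) (n : ℕ) : ℕ :=
  {w : Word | w.length = n ∧ IsFactor s w}.ncard

/-- `v` is a complementary symmetric Rote sequence. -/
def IsCSRote (v : ℕ → ZMod 2) : Prop :=
  (∀ n, 1 ≤ n → Cplx v n = 2 * n) ∧
  (∀ w : Word, IsFactor v w → IsFactor v (Ex w))

/-- The set of return words to the word `w` in the sequence `s`: words read between
two consecutive occurrences of `w` in `s`. -/
def ReturnWords (s : ℕ → ZMod 2) (w : Word) : Set Word :=
  {r | ∃ i j, OccAt s w i ∧ OccAt s w j ∧ i < j ∧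
        (∀ t, i < t → t < j → ¬ OccAt s w t) ∧
        r = List.ofFn fun t : Fin (j - i) => s (i + t)}

/-!
Reading on from an occurrence of `w` until `w` reappears traces out a binary tree of factors
rooted at `w`. Its exits are the words `r ++ w` with `r` a return word and its branching nodes are
right special factors, so there is one more return word than there are branching nodes. In a
complementary symmetric Rote sequence `C(n + 1) - C(n) = 2` leaves exactly two right special
factors of each positive length, and they are exchanges of each other. Hence, for a right special
factor `z`, the right special factors that are not longer than `z` are suffixes of `z` or `Ex z`.
If `z` is long enough to contain both `w` and `Ex w`, the branching nodes are the suffixes of `z`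
and of `Ex z` that start at the last occurrence of `w`, so there are two of them.
-/

/-- The factor of `s` of length `N` that starts at position `i`. -/
def factorAt (s : ℕ → ZMod 2) (i N : ℕ) : Word := List.ofFn fun k : Fin N => s (i + k)

/-- A word is right special in `s` if each of its one-letter right extensions is a factor. -/
def IsRightSpecial (s : ℕ → ZMod 2) (x : Word) : Prop := ∀ a : ZMod 2, IsFactor s (x ++ [a])

/-- A sequence is recurrent if each of its factors occurs infinitely often, that is, if every
occurrence is followed by a later one. -/
def IsRecurrent (s : ℕ → ZMod 2) : Prop := ∀ x i, OccAt s x i → ∃ j, i < j ∧ OccAt s x j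

section Occurrences

variable {s : ℕ → ZMod 2} {u w x y : Word} {i j N : ℕ}

@[simp] lemma length_factorAt : (factorAt s i N).length = N := by
  simp [factorAt]

lemma occAt_iff_factorAt_eq : OccAt s w i ↔ factorAt s i w.length = w := eq_comm

lemma occAt_iff_getElem : OccAt s w i ↔ ∀ k (hk : k < w.length), s (i + k) = w[k] := by
  simp [occAt_iff_factorAt_eq, List.ext_getElem_iff, factorAt]

lemma occAt_factorAt : OccAt s (factorAt s i N) i := by
  simp [occAt_iff_factorAt_eq]

lemma occAt_factorAt_iff : OccAt s (factorAt s i N) j ↔ ∀ k < N, s (j + k) = s (i + k) := by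
  simp [occAt_iff_getElem, factorAt]

lemma occAt_append : OccAt s (u ++ w) i ↔ OccAt s u i ∧ OccAt s w (i + u.length) := by
  simp only [occAt_iff_getElem, List.length_append]
  refine ⟨fun h => ⟨fun k hk => ?_, fun k hk => ?_⟩, fun ⟨hu, hw⟩ k hk => ?_⟩
  · rw [h k (by omega), List.getElem_append_left hk]
  · rw [add_assoc, h (u.length + k) (by omega), List.getElem_append_right (by omega)]
    simp only [Nat.add_sub_cancel_left]
  · by_cases hku : k < u.length
    · rw [hu k hku, List.getElem_append_left hku]
    · rw [List.getElem_append_right (by omega), ← hw (k - u.length) (by omega)]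
      congr 1
      omega

lemma OccAt.append_singleton (h : OccAt s x i) : OccAt s (x ++ [s (i + x.length)]) i :=
  occAt_append.2 ⟨h, by simp [occAt_iff_getElem]⟩

lemma OccAt.eq_of_length_eq (hx : OccAt s x i) (hy : OccAt s y i) (h : x.length = y.length) :
    x = y := by
  rw [occAt_iff_factorAt_eq] at hx hy
  rw [← hx, ← hy, h]

lemma OccAt.of_prefix (hy : OccAt s y i) (h : x <+: y) : OccAt s x i := by
  obtain ⟨v, rfl⟩ := h
  exact (occAt_append.1 hy).1

lemma OccAt.prefix_of_length_le (hx : OccAt s x i) (hy : OccAt s y i)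
    (h : x.length ≤ y.length) : x <+: y := by
  have htake : y.take x.length <+: y := List.take_prefix _ _
  exact hx.eq_of_length_eq (hy.of_prefix htake) (by simp [h]) ▸ htake

lemma OccAt.drop (hy : OccAt s y i) {t : ℕ} (ht : t ≤ y.length) :
    OccAt s (y.drop t) (i + t) := by
  rw [← List.take_append_drop t y, occAt_append, List.length_take_of_le ht] at hy
  exact hy.2

lemma OccAt.infix_factorAt_zero (hx : OccAt s x i) (h : i + x.length ≤ N) :
    x <:+: factorAt s 0 N := by
  have hdrop : OccAt s ((factorAt s 0 N).drop i) i := by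
    simpa using occAt_factorAt.drop (s := s) (i := 0) (y := factorAt s 0 N) (t := i)
      (by rw [length_factorAt]; omega)
  have hpre : x <+: (factorAt s 0 N).drop i :=
    hx.prefix_of_length_le hdrop (by rw [List.length_drop, length_factorAt]; omega)
  exact hpre.isInfix.trans (List.drop_suffix i _).isInfix

lemma OccAt.isFactor (h : OccAt s x i) : IsFactor s x := ⟨i, h⟩

lemma IsFactor.of_infix (hy : IsFactor s y) (h : x <:+: y) : IsFactor s x := by
  obtain ⟨m, hm⟩ := hy
  obtain ⟨u, v, rfl⟩ := h
  exact (occAt_append.1 (occAt_append.1 hm).1).2.isFactor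

lemma IsRightSpecial.isFactor (h : IsRightSpecial s x) : IsFactor s x :=
  (h 0).of_infix (List.prefix_append x [0]).isInfix

lemma IsRightSpecial.of_suffix (hy : IsRightSpecial s y) (h : x <:+ y) :
    IsRightSpecial s x := by
  obtain ⟨u, rfl⟩ := h
  exact fun a => (hy a).of_infix (List.IsSuffix.isInfix ⟨u, by simp⟩)

end Occurrences

section Counting

/-- The factors of `s` obtained by appending one letter to a word of `A`: the children of the
nodes in `A`, when the factors of `s` are viewed as a binary tree ordered by prefixes. -/
def extensions (s : ℕ → ZMod 2) (A : Set Word) : Set Word :=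
  {z | IsFactor s z ∧ ∃ y ∈ A, ∃ a, z = y ++ [a]}

variable {s : ℕ → ZMod 2} {A : Set Word}

lemma forall_zmod_two {p : ZMod 2 → Prop} : (∀ a, p a) ↔ p 0 ∧ p 1 := Fin.forall_fin_two

lemma exists_zmod_two {p : ZMod 2 → Prop} : (∃ a, p a) ↔ p 0 ∨ p 1 := Fin.exists_fin_two

theorem ncard_extensions (hA : A.Finite) (hfac : ∀ y ∈ A, IsFactor s y) :
    (extensions s A).ncard = A.ncard + {y ∈ A | IsRightSpecial s y}.ncard := by
  let F (a : ZMod 2) : Set Word := {y ∈ A | IsFactor s (y ++ [a])}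
  have hF (a) : (F a).Finite := hA.subset (Set.sep_subset _ _)
  have hunion : A = F 0 ∪ F 1 := by
    ext y
    simp only [F, Set.mem_union, Set.mem_ofPred_eq, ← and_or_left, iff_self_and]
    intro hy
    obtain ⟨i, hi⟩ := hfac y hy
    have hex : ∃ a, IsFactor s (y ++ [a]) := ⟨_, hi.append_singleton.isFactor⟩
    exact exists_zmod_two.1 hex
  have hinter : {y ∈ A | IsRightSpecial s y} = F 0 ∩ F 1 := by
    ext y
    simp only [F, IsRightSpecial, forall_zmod_two, Set.mem_inter_iff, Set.mem_ofPred_eq,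
      ← and_and_left]
  have hext : extensions s A = (· ++ [0]) '' F 0 ∪ (· ++ [1]) '' F 1 := by
    ext z
    simp only [extensions, F, exists_zmod_two, Set.mem_union, Set.mem_image, Set.mem_ofPred_eq]
    constructor
    · rintro ⟨hz, y, hy, rfl | rfl⟩
      exacts [.inl ⟨y, ⟨hy, hz⟩, rfl⟩, .inr ⟨y, ⟨hy, hz⟩, rfl⟩]
    · rintro (⟨y, ⟨hy, hz⟩, rfl⟩ | ⟨y, ⟨hy, hz⟩, rfl⟩)
      exacts [⟨hz, y, hy, .inl rfl⟩, ⟨hz, y, hy, .inr rfl⟩]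
  have hdisj : Disjoint ((· ++ [(0 : ZMod 2)]) '' F 0) ((· ++ [1]) '' F 1) := by
    rw [Set.disjoint_left]
    rintro _ ⟨x, -, rfl⟩ ⟨y, -, hy⟩
    simpa using (List.append_inj' hy rfl).2
  rw [hext, Set.ncard_union_eq hdisj ((hF 0).image _) ((hF 1).image _),
    Set.ncard_image_of_injective _ (List.append_left_injective _),
    Set.ncard_image_of_injective _ (List.append_left_injective _),
    hinter, ← Set.ncard_union_add_ncard_inter _ _ (hF 0) (hF 1), ← hunion]

lemma extensions_mono {B : Set Word} (h : A ⊆ B) : extensions s A ⊆ extensions s B :=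
  fun _ ⟨hz, y, hy, ha⟩ => ⟨hz, y, h hy, ha⟩

-- Of the `A.ncard + #(right special nodes)` children of nodes of `A`, all but `A.ncard - 1` lie
-- outside `A`, since every node except the root is the child of a node.
theorem ncard_extensions_sdiff {root : Word} (hA : A.Finite) (hfac : ∀ y ∈ A, IsFactor s y)
    (hroot : root ∈ A) (hroot_ext : root ∉ extensions s A)
    (hparent : A \ {root} ⊆ extensions s A) :
    (extensions s A \ A).ncard = {y ∈ A | IsRightSpecial s y}.ncard + 1 := by
  have hcard := ncard_extensions hA hfac
  have hpos : 0 < A.ncard := (Set.ncard_pos hA).2 ⟨root, hroot⟩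
  have hfin : (extensions s A).Finite := Set.finite_of_ncard_ne_zero (by omega)
  have hinter : extensions s A ∩ A = A \ {root} :=
    Set.Subset.antisymm (fun y hy => ⟨hy.2, fun h => hroot_ext (h ▸ hy.1)⟩)
      (fun y hy => ⟨hparent hy, hy.1⟩)
  have hsplit := Set.ncard_inter_add_ncard_sdiff_eq_ncard (extensions s A) A hfin
  rw [hinter, Set.ncard_sdiff_singleton_of_mem hroot] at hsplit
  omega

lemma finite_setOf_isFactor_length (s : ℕ → ZMod 2) (N : ℕ) :
    {x | x.length = N ∧ IsFactor s x}.Finite :=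
  (List.finite_length_eq (ZMod 2) N).subset fun _ hx => hx.1

theorem cplx_succ (s : ℕ → ZMod 2) (N : ℕ) :
    Cplx s (N + 1) = Cplx s N + {x | x.length = N ∧ IsRightSpecial s x}.ncard := by
  have hext : {x | x.length = N + 1 ∧ IsFactor s x} =
      extensions s {x | x.length = N ∧ IsFactor s x} := by
    ext z
    constructor
    · rintro ⟨hlen, hz⟩
      have hne : z ≠ [] := List.ne_nil_of_length_eq_add_one hlen
      obtain ⟨y, a, rfl⟩ := (List.eq_nil_or_concat' z).resolve_left hne
      exact ⟨hz, y, ⟨by simpa using hlen, hz.of_infix (List.prefix_append y [a]).isInfix⟩, a, rfl⟩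
    · rintro ⟨hz, y, ⟨hlen, -⟩, a, rfl⟩
      exact ⟨by simp [hlen], hz⟩
  have hspecial : {x ∈ {x | x.length = N ∧ IsFactor s x} | IsRightSpecial s x} =
      {x | x.length = N ∧ IsRightSpecial s x} := by
    ext x
    exact ⟨fun h => ⟨h.1.1, h.2⟩, fun h => ⟨⟨h.1, h.2.isFactor⟩, h.2⟩⟩
  rw [Cplx, hext, ncard_extensions (finite_setOf_isFactor_length s N) fun _ hy => hy.2, hspecial,
    Cplx]

lemma cplx_le_of_eventually_periodic {i j : ℕ} (hij : i < j)
    (hper : ∀ k, s (i + k) = s (j + k)) (N : ℕ) : Cplx s N ≤ j := by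
  have hreduce : ∀ m, ∃ l < j, factorAt s m N = factorAt s l N := by
    intro m
    induction m using Nat.strong_induction_on with
    | _ m ih =>
      by_cases hm : m < j
      · exact ⟨m, hm, rfl⟩
      · obtain ⟨l, hl, heq⟩ := ih (i + (m - j)) (by omega)
        refine ⟨l, hl, heq ▸ congrArg List.ofFn (funext fun k => ?_)⟩
        rw [add_assoc, hper, ← add_assoc, Nat.add_sub_cancel' (by omega)]
  have hsub : {x | x.length = N ∧ IsFactor s x} ⊆ (factorAt s · N) '' Set.Iio j := by
    rintro x ⟨rfl, m, hm⟩
    obtain ⟨l, hl, heq⟩ := hreduce m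
    exact ⟨l, hl, heq.symm.trans (occAt_iff_factorAt_eq.1 hm)⟩
  calc Cplx s N ≤ ((factorAt s · N) '' Set.Iio j).ncard :=
        Set.ncard_le_ncard hsub ((Set.finite_Iio j).image _)
    _ ≤ (Set.Iio j).ncard := Set.ncard_image_le (Set.finite_Iio j)
    _ = j := by simp

theorem IsRecurrent.exists_isRightSpecial {x : Word} (hrec : IsRecurrent s)
    (hunbdd : ∀ b, ∃ N, b < Cplx s N) (hx : IsFactor s x) :
    ∃ y, x <+: y ∧ IsRightSpecial s y := by
  classical
  obtain ⟨i, hi⟩ := hx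
  obtain ⟨j, hij, hj⟩ := hrec x i hi
  have hdiff : ∃ k, s (i + k) ≠ s (j + k) := by
    by_contra! hper
    obtain ⟨N, hN⟩ := hunbdd j
    exact hN.not_ge (cplx_le_of_eventually_periodic hij hper N)
  let M := Nat.find hdiff
  have hagree (k) (hk : k < M) : s (i + k) = s (j + k) := not_not.1 (Nat.find_min hdiff hk)
  have hM : s (i + M) ≠ s (j + M) := Nat.find_spec hdiff
  have hxM : x.length ≤ M := by
    by_contra! hlt
    rw [occAt_iff_getElem] at hi hj
    exact hM ((hi M hlt).trans (hj M hlt).symm)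
  have hjM : OccAt s (factorAt s i M) j := occAt_factorAt_iff.2 fun k hk => (hagree k hk).symm
  refine ⟨factorAt s i M, hi.prefix_of_length_le occAt_factorAt (by simpa using hxM), fun a => ?_⟩
  have hletter : ∀ a b c : ZMod 2, b ≠ c → a = b ∨ a = c := by decide
  rcases hletter a _ _ hM with rfl | rfl
  · simpa using (occAt_factorAt (s := s) (i := i) (N := M)).append_singleton.isFactor
  · simpa using hjM.append_singleton.isFactor

end Counting

section ReturnTree

/-- The word `w` occurs exactly once in `y`, namely as a prefix. Occurrences of `w` in `y` are
encoded as suffixes of `y` that begin with `w`. -/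
def OccursOnlyAsPrefix (w y : Word) : Prop :=
  w <+: y ∧ ∀ u, u <:+ y → w <+: u → u = y

/-- The tree of factors obtained by reading `s` from an occurrence of `w` while `w` has not
reappeared. Its root is `w`, and the words at which it is left are the complete return words
`r ++ w`, where `r` is a return word to `w`. -/
def returnTree (s : ℕ → ZMod 2) (w : Word) : Set Word :=
  {y | IsFactor s y ∧ OccursOnlyAsPrefix w y}

/-- The branching nodes of the return tree. -/
def branchWords (s : ℕ → ZMod 2) (w : Word) : Set Word :=
  {y ∈ returnTree s w | IsRightSpecial s y}

variable {s : ℕ → ZMod 2} {u w x y : Word} {i : ℕ} {a : ZMod 2}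

lemma occursOnlyAsPrefix_self (w : Word) : OccursOnlyAsPrefix w w :=
  ⟨List.prefix_rfl, fun _ hu hwu => hu.eq_of_length_le hwu.length_le⟩

lemma occursOnlyAsPrefix_append_singleton_iff (hlen : w.length ≤ y.length) :
    OccursOnlyAsPrefix w (y ++ [a]) ↔ OccursOnlyAsPrefix w y ∧ ¬ w <:+ y ++ [a] := by
  constructor
  · rintro ⟨hpre, honly⟩
    refine ⟨⟨List.prefix_of_prefix_length_le hpre (List.prefix_append y [a]) hlen,
      fun u hu hwu => ?_⟩, fun hsuf => ?_⟩
    · have := honly (u ++ [a]) (List.suffix_append_inj_of_length_eq rfl |>.2 ⟨hu, rfl⟩)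
        (hwu.trans (List.prefix_append u [a]))
      exact List.append_cancel_right this
    · have := congrArg List.length (honly w hsuf List.prefix_rfl)
      rw [List.length_append, List.length_singleton] at this
      omega
  · rintro ⟨⟨hpre, honly⟩, hsuf⟩
    refine ⟨hpre.trans (List.prefix_append y [a]), fun u hu hwu => ?_⟩
    rcases List.suffix_concat_iff.1 hu with rfl | ⟨t, rfl, ht⟩
    · exact absurd (List.prefix_nil.1 hwu ▸ List.nil_suffix) hsuf
    · rcases List.prefix_concat_iff.1 hwu with rfl | hwt
      · exact absurd hu hsuf
      · rw [honly t ht hwt]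

-- The suffix `y` starts at the last occurrence of `w` in `x`.
lemma exists_suffix_occursOnlyAsPrefix (h : w <:+: x) :
    ∃ y, y <:+ x ∧ OccursOnlyAsPrefix w y := by
  induction x with
  | nil =>
    obtain rfl := List.infix_nil.1 h
    exact ⟨[], List.suffix_rfl, occursOnlyAsPrefix_self []⟩
  | cons a x ih =>
    by_cases hx : w <:+: x
    · obtain ⟨y, hyx, hy⟩ := ih hx
      exact ⟨y, hyx.trans (List.suffix_cons a x), hy⟩
    · refine ⟨a :: x, List.suffix_rfl, (List.infix_cons_iff.1 h).resolve_right hx,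
        fun u hu hwu => (List.suffix_cons_iff.1 hu).resolve_right fun hux => ?_⟩
      exact hx (hwu.isInfix.trans hux.isInfix)

lemma OccursOnlyAsPrefix.eq_of_suffix (hx : OccursOnlyAsPrefix w x) (hy : OccursOnlyAsPrefix w y)
    (hxu : x <:+ u) (hyu : y <:+ u) : x = y := by
  rcases List.suffix_or_suffix_of_suffix hxu hyu with hxy | hyx
  · exact hy.2 x hxy hx.1
  · exact (hx.2 y hyx hy.1).symm

lemma OccAt.occursOnlyAsPrefix_iff (hy : OccAt s y i) : OccursOnlyAsPrefix w y ↔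
    w.length ≤ y.length ∧ OccAt s w i ∧
      ∀ t, 0 < t → t + w.length ≤ y.length → ¬ OccAt s w (i + t) := by
  constructor
  · rintro ⟨hpre, honly⟩
    refine ⟨hpre.length_le, hy.of_prefix hpre, fun t ht hty hocc => ?_⟩
    have hwt : w <+: y.drop t :=
      hocc.prefix_of_length_le (hy.drop (by omega)) (by rw [List.length_drop]; omega)
    have := congrArg List.length (honly _ (List.drop_suffix t y) hwt)
    rw [List.length_drop] at this
    omega
  · rintro ⟨hlen, hw, hlater⟩
    refine ⟨hw.prefix_of_length_le hy hlen, ?_⟩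
    rintro u ⟨v, rfl⟩ hwu
    have hv : v = [] := by
      by_contra hne
      refine hlater v.length (List.length_pos_iff.2 hne) ?_
        ((occAt_append.1 hy).2.of_prefix hwu)
      simpa using hwu.length_le
    simp [hv]

lemma append_mem_extensions_sdiff_of_mem_returnWords {r : Word} (hr : r ∈ ReturnWords s w) :
    r ++ w ∈ extensions s (returnTree s w) \ returnTree s w := by
  obtain ⟨i, j, hi, hj, hij, hbetween, hr⟩ := hr
  have hrlen : r.length = j - i := by simp [hr]
  have hz : OccAt s (r ++ w) i := by
    refine occAt_append.2 ⟨hr ▸ occAt_factorAt, ?_⟩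
    rwa [hrlen, Nat.add_sub_cancel' hij.le]
  have hne : r ++ w ≠ [] := by
    rw [← List.length_pos_iff, List.length_append]
    omega
  obtain ⟨y, a, hya⟩ := (List.eq_nil_or_concat' (r ++ w)).resolve_left hne
  have hlen := congrArg List.length hya
  simp only [List.length_append, List.length_singleton] at hlen
  have hy : OccAt s y i := hz.of_prefix ⟨[a], hya.symm⟩
  have honly : OccursOnlyAsPrefix w y := hy.occursOnlyAsPrefix_iff.2
    ⟨by omega, hi, fun t ht hty => hbetween (i + t) (by omega) (by omega)⟩
  refine ⟨⟨hz.isFactor, y, ⟨hy.isFactor, honly⟩, a, hya⟩, fun hmem => ?_⟩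
  rw [hya] at hmem
  exact ((occursOnlyAsPrefix_append_singleton_iff (by omega)).1 hmem.2).2
    (hya ▸ List.suffix_append r w)

lemma exists_mem_returnWords_append_eq {z : Word}
    (hz : z ∈ extensions s (returnTree s w) \ returnTree s w) :
    ∃ r ∈ ReturnWords s w, r ++ w = z := by
  obtain ⟨⟨⟨i, hi⟩, y, ⟨-, hy⟩, a, rfl⟩, hnot⟩ := hz
  obtain ⟨r, hr⟩ : w <:+ y ++ [a] := by
    by_contra hsuf
    exact hnot ⟨⟨i, hi⟩, (occursOnlyAsPrefix_append_singleton_iff hy.1.length_le).2 ⟨hy, hsuf⟩⟩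
  have hlen := congrArg List.length hr
  simp only [List.length_append, List.length_singleton] at hlen
  obtain ⟨hwy, hwi, hlater⟩ :=
    (hi.of_prefix (List.prefix_append y [a])).occursOnlyAsPrefix_iff.1 hy
  obtain ⟨hri, hwj⟩ := occAt_append.1 (hr ▸ hi)
  refine ⟨r, ⟨i, i + r.length, hwi, hwj, by omega, fun t hit htj => ?_, ?_⟩, hr⟩
  · have := hlater (t - i) (by omega) (by omega)
    rwa [Nat.add_sub_cancel' hit.le] at this
  · rw [Nat.add_sub_cancel_left]
    exact hri

lemma ncard_returnWords_eq_ncard_extensions_sdiff (s : ℕ → ZMod 2) (w : Word) :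
    (ReturnWords s w).ncard = (extensions s (returnTree s w) \ returnTree s w).ncard := by
  have himage : (· ++ w) '' ReturnWords s w =
      extensions s (returnTree s w) \ returnTree s w := by
    refine Set.Subset.antisymm ?_ fun _ => exists_mem_returnWords_append_eq
    rintro _ ⟨r, hr, rfl⟩
    exact append_mem_extensions_sdiff_of_mem_returnWords hr
  rw [← himage, Set.ncard_image_of_injective _ (List.append_left_injective w)]

lemma notMem_extensions_returnTree : w ∉ extensions s (returnTree s w) := by
  rintro ⟨-, y, hy, a, hwy⟩
  have hlen := hy.2.1.length_le
  rw [hwy, List.length_append, List.length_singleton] at hlen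
  omega

lemma returnTree_sdiff_singleton_subset_extensions :
    returnTree s w \ {w} ⊆ extensions s (returnTree s w) := by
  rintro y ⟨⟨hfac, honly⟩, hne⟩
  obtain rfl | ⟨x, a, rfl⟩ := List.eq_nil_or_concat' y
  · exact absurd (List.prefix_nil.1 honly.1).symm hne
  · have hwx := (List.prefix_concat_iff.1 honly.1).resolve_left (Ne.symm hne)
    exact ⟨hfac, x, ⟨hfac.of_infix (List.prefix_append x [a]).isInfix,
      ((occursOnlyAsPrefix_append_singleton_iff hwx.length_le).1 honly).1⟩, a, rfl⟩

-- The return tree is not yet known to be finite, so the exits are counted for its truncation at a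
-- height that bounds the lengths of the words in `F`.
lemma ncard_le_of_subset_extensions_sdiff (hw : IsFactor s w) (hB : (branchWords s w).Finite)
    {F : Set Word} (hF : F.Finite) (hsub : F ⊆ extensions s (returnTree s w) \ returnTree s w) :
    F.ncard ≤ (branchWords s w).ncard + 1 := by
  obtain ⟨L, hL⟩ := ((hF.insert w).image List.length).bddAbove
  have hlen (z) (hz : z ∈ insert w F) : z.length ≤ L := hL ⟨z, hz, rfl⟩
  let A : Set Word := {y ∈ returnTree s w | y.length ≤ L}
  have hA : A.Finite := (List.finite_length_le (ZMod 2) L).subset fun y hy => hy.2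
  have hAT : A ⊆ returnTree s w := Set.sep_subset _ _
  have hext {z} (hz : z ∈ extensions s (returnTree s w)) (hzL : z.length ≤ L) :
      z ∈ extensions s A := by
    obtain ⟨hfac, y, hy, a, rfl⟩ := hz
    rw [List.length_append] at hzL
    exact ⟨hfac, y, ⟨hy, by omega⟩, a, rfl⟩
  have hexits : (extensions s A \ A).ncard = {y ∈ A | IsRightSpecial s y}.ncard + 1 :=
    ncard_extensions_sdiff hA (fun y hy => hy.1.1)
      ⟨⟨hw, occursOnlyAsPrefix_self w⟩, hlen w (Set.mem_insert w F)⟩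
      (fun h => notMem_extensions_returnTree (extensions_mono hAT h))
      fun y hy => hext (returnTree_sdiff_singleton_subset_extensions ⟨hAT hy.1, hy.2⟩) hy.1.2
  have hexits_fin : (extensions s A \ A).Finite := Set.finite_of_ncard_ne_zero (by omega)
  calc F.ncard ≤ (extensions s A \ A).ncard := Set.ncard_le_ncard
        (fun z hz => ⟨hext (hsub hz).1 (hlen z (Set.mem_insert_of_mem w hz)),
          fun hzA => (hsub hz).2 (hAT hzA)⟩) hexits_fin
    _ = {y ∈ A | IsRightSpecial s y}.ncard + 1 := hexits
    _ ≤ (branchWords s w).ncard + 1 :=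
        Nat.succ_le_succ (Set.ncard_le_ncard (fun y hy => ⟨hAT hy.1, hy.2⟩) hB)

lemma finite_extensions_sdiff_returnTree (hw : IsFactor s w) (hB : (branchWords s w).Finite) :
    (extensions s (returnTree s w) \ returnTree s w).Finite := by
  by_contra hinf
  obtain ⟨F, hsub, hF, hcard⟩ :=
    Set.Infinite.exists_subset_ncard_eq hinf ((branchWords s w).ncard + 2)
  have := ncard_le_of_subset_extensions_sdiff hw hB hF hsub
  omega

lemma IsRecurrent.exists_mem_returnWords_prefix (hrec : IsRecurrent s)
    (hy : y ∈ returnTree s w) : ∃ r ∈ ReturnWords s w, y <+: r ++ w := by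
  classical
  obtain ⟨⟨i, hi⟩, honly⟩ := hy
  obtain ⟨-, hwi, hlater⟩ := hi.occursOnlyAsPrefix_iff.1 honly
  have hnext : ∃ j, i < j ∧ OccAt s w j := hrec w i hwi
  obtain ⟨hij, hj⟩ := Nat.find_spec hnext
  set j := Nat.find hnext
  refine ⟨factorAt s i (j - i), ⟨i, j, hwi, hj, hij,
    fun t hit htj ht => Nat.find_min hnext htj ⟨hit, ht⟩, rfl⟩, ?_⟩
  have hocc : OccAt s (factorAt s i (j - i) ++ w) i :=
    occAt_append.2 ⟨occAt_factorAt, by rwa [length_factorAt, Nat.add_sub_cancel' hij.le]⟩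
  refine hi.prefix_of_length_le hocc ?_
  by_contra! hlt
  rw [List.length_append, length_factorAt] at hlt
  refine hlater (j - i) (by omega) (by omega) ?_
  rwa [Nat.add_sub_cancel' hij.le]

lemma IsRecurrent.finite_returnTree (hrec : IsRecurrent s) (hw : IsFactor s w)
    (hB : (branchWords s w).Finite) : (returnTree s w).Finite := by
  refine ((finite_extensions_sdiff_returnTree hw hB).biUnion fun z _ =>
    List.finite_toSet z.inits).subset fun y hy => ?_
  obtain ⟨r, hr, hyr⟩ := hrec.exists_mem_returnWords_prefix hy
  exact Set.mem_biUnion (append_mem_extensions_sdiff_of_mem_returnWords hr)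
    ((List.mem_inits _ _).2 hyr)

theorem IsRecurrent.ncard_returnWords (hrec : IsRecurrent s) (hw : IsFactor s w)
    (hB : (branchWords s w).Finite) :
    (ReturnWords s w).ncard = (branchWords s w).ncard + 1 := by
  rw [ncard_returnWords_eq_ncard_extensions_sdiff]
  exact ncard_extensions_sdiff (hrec.finite_returnTree hw hB) (fun y hy => hy.1)
    ⟨hw, occursOnlyAsPrefix_self w⟩ notMem_extensions_returnTree
    returnTree_sdiff_singleton_subset_extensions

end ReturnTree

section LetterExchange

variable {s : ℕ → ZMod 2} {x y : Word}

@[simp] lemma length_ex : (Ex x).length = x.length := List.length_map _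

lemma ex_append : Ex (x ++ y) = Ex x ++ Ex y := List.map_append

@[simp] lemma ex_ex : Ex (Ex x) = x := by
  simp [Ex, CharTwo.add_self_eq_zero]

lemma ex_ne_self (hx : x ≠ []) : Ex x ≠ x := by
  obtain ⟨a, x, rfl⟩ := List.exists_cons_of_ne_nil hx
  simp [Ex]

lemma ex_suffix_ex (h : x <:+ y) : Ex x <:+ Ex y := h.map _

lemma ex_infix_ex (h : x <:+: y) : Ex x <:+: Ex y := h.map _

lemma not_suffix_ex_of_suffix (hx : x ≠ []) (h : x <:+ y) : ¬ x <:+ Ex y := fun hE =>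
  ex_ne_self hx ((List.suffix_of_suffix_length_le (ex_suffix_ex h) hE length_ex.le).eq_of_length
    length_ex)

lemma IsRightSpecial.ex (hE : ∀ x, IsFactor s x → IsFactor s (Ex x)) (hx : IsRightSpecial s x) :
    IsRightSpecial s (Ex x) := by
  intro a
  have := hE _ (hx (a + 1))
  rw [ex_append] at this
  simpa [Ex, add_assoc, CharTwo.add_self_eq_zero] using this

-- A prefix `p` of `s` and its exchange `Ex p` both lie in some prefix `q`; then `Ex q` contains
-- `p = Ex (Ex p)` at a positive distance from its start.
lemma isRecurrent_of_forall_isFactor_ex (hE : ∀ x, IsFactor s x → IsFactor s (Ex x)) :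
    IsRecurrent s := by
  intro x i hi
  let p := factorAt s 0 i ++ (x ++ [s (i + x.length)])
  have hp : OccAt s p 0 := by
    refine occAt_append.2 ⟨occAt_factorAt, ?_⟩
    simpa using hi.append_singleton
  obtain ⟨m, hm⟩ := hE p hp.isFactor
  have hm_pos : 0 < m := by
    refine Nat.pos_of_ne_zero ?_
    rintro rfl
    exact ex_ne_self (by simp [p]) (hm.eq_of_length_eq hp length_ex)
  have hq : OccAt s (factorAt s 0 m ++ Ex p) 0 :=
    occAt_append.2 ⟨occAt_factorAt, by simpa using hm⟩
  obtain ⟨l, hl⟩ := hE _ hq.isFactor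
  rw [ex_append, ex_ex, occAt_append, length_ex, length_factorAt] at hl
  have hx := (occAt_append.1 (occAt_append.1 hl.2).2).1
  rw [length_factorAt] at hx
  exact ⟨l + m + i, by omega, hx⟩

end LetterExchange

namespace IsCSRote

variable {s : ℕ → ZMod 2} {w x y : Word}

lemma isRecurrent (h : IsCSRote s) : IsRecurrent s := isRecurrent_of_forall_isFactor_ex h.2

lemma ncard_isRightSpecial_length (h : IsCSRote s) {N : ℕ} (hN : 1 ≤ N) :
    {x | x.length = N ∧ IsRightSpecial s x}.ncard = 2 := by
  have hsucc := cplx_succ s N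
  rw [h.1 N hN, h.1 (N + 1) (by omega)] at hsucc
  omega

lemma eq_or_eq_ex (h : IsCSRote s) (hx : IsRightSpecial s x) (hy : IsRightSpecial s y)
    (hlen : x.length = y.length) : x = y ∨ x = Ex y := by
  rcases eq_or_ne y [] with rfl | hne
  · exact .inl (List.eq_nil_of_length_eq_zero hlen)
  have htwo := h.ncard_isRightSpecial_length (List.length_pos_iff.2 hne)
  have hpair : {y, Ex y} ⊆ {x | x.length = y.length ∧ IsRightSpecial s x} := by
    rintro _ (rfl | rfl)
    exacts [⟨rfl, hy⟩, ⟨length_ex, hy.ex h.2⟩]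
  have heq := Set.eq_of_subset_of_ncard_le hpair
    (by rw [htwo, Set.ncard_pair (ex_ne_self hne).symm]) (Set.finite_of_ncard_ne_zero (by omega))
  have hmem : x ∈ ({y, Ex y} : Set Word) := heq ▸ ⟨hlen, hx⟩
  simpa using hmem

lemma suffix_or_suffix_ex (h : IsCSRote s) (hx : IsRightSpecial s x) (hy : IsRightSpecial s y)
    (hlen : x.length ≤ y.length) : x <:+ y ∨ x <:+ Ex y := by
  have hsuf : y.drop (y.length - x.length) <:+ y := List.drop_suffix _ _
  rcases h.eq_or_eq_ex hx (hy.of_suffix hsuf) (by rw [List.length_drop]; omega) with heq | heq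
  · exact .inl (heq ▸ hsuf)
  · exact .inr (heq ▸ ex_suffix_ex hsuf)

lemma exists_isRightSpecial_infix (h : IsCSRote s) (hx : IsFactor s x) (hy : IsFactor s y) :
    ∃ z, IsRightSpecial s z ∧ x <:+: z ∧ y <:+: z := by
  obtain ⟨i, hi⟩ := hx
  obtain ⟨j, hj⟩ := hy
  have hunbdd (b) : ∃ N, b < Cplx s N := ⟨b + 1, by rw [h.1 (b + 1) (by omega)]; omega⟩
  obtain ⟨z, hpz, hz⟩ := h.isRecurrent.exists_isRightSpecial hunbdd
    (occAt_factorAt (s := s) (i := 0) (N := i + x.length + (j + y.length))).isFactor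
  exact ⟨z, hz, (hi.infix_factorAt_zero (by omega)).trans hpz.isInfix,
    (hj.infix_factorAt_zero (by omega)).trans hpz.isInfix⟩

lemma suffix_or_suffix_ex_of_mem_branchWords (h : IsCSRote s) {z : Word}
    (hz : IsRightSpecial s z) (hwz : w <:+: z) (hwEz : w <:+: Ex z) (hy : y ∈ branchWords s w) :
    y <:+ z ∨ y <:+ Ex z := by
  obtain ⟨⟨-, honly⟩, hspecial⟩ := hy
  rcases le_total y.length z.length with hle | hle
  · exact h.suffix_or_suffix_ex hspecial hz hle
  · have heq {u} (huy : u <:+ y) (hwu : w <:+: u) : u = y := by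
      obtain ⟨t, htu, ht⟩ := exists_suffix_occursOnlyAsPrefix hwu
      have hty := honly.2 t (htu.trans huy) ht.1
      exact huy.eq_of_length_le (hty ▸ htu.length_le)
    rcases h.suffix_or_suffix_ex hz hspecial hle with hzy | hzy
    · exact .inl (heq hzy hwz ▸ List.suffix_rfl)
    · exact .inr (heq (by simpa using ex_suffix_ex hzy) hwEz ▸ List.suffix_rfl)

theorem ncard_branchWords (h : IsCSRote s) (hw : IsFactor s w) (hne : w ≠ []) :
    (branchWords s w).ncard = 2 := by
  obtain ⟨z, hz, hwz, hEwz⟩ := h.exists_isRightSpecial_infix hw (h.2 w hw)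
  have hwEz : w <:+: Ex z := by simpa using ex_infix_ex hEwz
  obtain ⟨y, hyz, hy⟩ := exists_suffix_occursOnlyAsPrefix hwz
  obtain ⟨y', hyz', hy'⟩ := exists_suffix_occursOnlyAsPrefix hwEz
  have hys := hz.of_suffix hyz
  have hys' := (hz.ex h.2).of_suffix hyz'
  have hbranch : branchWords s w = {y, y'} := by
    ext u
    constructor
    · intro hu
      rcases h.suffix_or_suffix_ex_of_mem_branchWords hz hwz hwEz hu with huz | huz
      · exact .inl (hu.1.2.eq_of_suffix hy huz hyz)
      · exact .inr (hu.1.2.eq_of_suffix hy' huz hyz')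
    · rintro (rfl | rfl)
      exacts [⟨⟨hys.isFactor, hy⟩, hys⟩, ⟨⟨hys'.isFactor, hy'⟩, hys'⟩]
  have hyy' : y ≠ y' := by
    rintro rfl
    exact not_suffix_ex_of_suffix (fun hnil => hne (List.prefix_nil.1 (hnil ▸ hy.1))) hyz hyz'
  rw [hbranch, Set.ncard_pair hyy']

end IsCSRote

theorem rote_three_return_words_general (v : ℕ → ZMod 2) (hrote : IsCSRote v) {w : Word}
    (hw : IsFactor v w) (hne : w ≠ []) : (ReturnWords v w).ncard = 3 := by
  have htwo := hrote.ncard_branchWords hw hne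
  rw [hrote.isRecurrent.ncard_returnWords hw (Set.finite_of_ncard_ne_zero (by omega)), htwo]

/-- every non-empty prefix of a complementary symmetric Rote sequence has
exactly three distinct return words. -/
theorem rote_three_return_words (v : ℕ → ZMod 2) (hrote : IsCSRote v) :
    ∀ n, 1 ≤ n → (ReturnWords v (List.ofFn fun i : Fin n => v i)).ncard = 3 := by
  intro n hn
  exact rote_three_return_words_general v hrote ⟨0, by simp [OccAt]⟩
    (List.ne_nil_of_length_pos (by rw [List.length_ofFn]; omega))
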